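/- Let Γ be a finite extensive-form game with perfect recall. A behavioral strategy profile β* is a subgame perfect equilibrium in behavioral strategies if and only if there exist a behavioral strategy profile β̃*, a belief system μ*, and multipliers λ*, λ̃*, ζ*, ζ̃* such that (β*, β̃*, μ*, λ*, λ̃*, ζ*, ζ̃*) solves the system: u^i((a, ϱ^i_{I_i^j}(β^{-I_i^j}, β̃)) ⋄ I_i^j) + λ^i_{I_i^j}(a) − ζ^i_{I_i^j} = 0 and u^i(a, ϱ^i_{I_i^j}(β^{-I_i^j}, β̃), μ | I_i^j) + λ̃^i_{I_i^j}(a) − ζ̃^i_{I_i^j} = 0 for all i ∈ N, j ∈ M_i, a ∈ A(I_i^j); Y^i(I_i^j|β) μ^i_{I_i^j}(h) = Y^i(h|β) and μ^i_{I_i^j}(h) ≥ 0 for all i, j, h ∈ I_i^j; Σ_{h ∈ I_i^j} μ^i_{I_i^j}(h) = 1, Σ_{a ∈ A(I_i^j)} β^i_{I_i^j}(a) = 1, Σ_{a ∈ A(I_i^j)} β̃^i_{I_i^j}(a) = 1 for all i, j; β^i_{I_i^j}(a) λ^i_{I_i^j}(a) = 0, β̃^i_{I_i^j}(a) λ̃^i_{I_i^j}(a)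 = 0, and β^i_{I_i^j}(a) ≥ 0, λ^i_{I_i^j}(a) ≥ 0, β̃^i_{I_i^j}(a) ≥ 0, λ̃^i_{I_i^j}(a) ≥ 0 for all i, j, a ∈ A(I_i^j). -/

import Mathlib

open scoped Classical

noncomputable section

/-- A finite extensive-form game.  Actions are labelled by natural numbers drawn from the
finite pool `actFinset`; a history is the list of actions taken so far; players are `Fin n`
and `P h = none` means that the chance player moves after `h`.  The information sets of
player `i` are `Info i j` for `j < m i`, and `infoIdx h` is the index of the information
set containing a nonterminal history `h` at which some player moves.  Payoffs `u i h` are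
relevant on terminal histories. -/
structure EFG where
  n : ℕ
  actFinset : Finset ℕ
  H : Finset (List ℕ)
  P : List ℕ → Option (Fin n)
  fc : List ℕ → ℕ → ℝ
  m : Fin n → ℕ
  Info : Fin n → ℕ → Finset (List ℕ)
  infoIdx : List ℕ → ℕ
  u : Fin n → List ℕ → ℝ
  empty_mem : ([] : List ℕ) ∈ H
  prefixClosed : ∀ h ∈ H, ∀ h' : List ℕ, h' <+: h → h' ∈ H
  act_mem : ∀ (h : List ℕ) (a : ℕ), h ++ [a] ∈ H → a ∈ actFinset
  fc_nonneg : ∀ h a, 0 ≤ fc h a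
  fc_sum : ∀ h ∈ H, P h = none → (∃ a, h ++ [a] ∈ H) →
    ∑ a ∈ actFinset.filter (fun a => h ++ [a] ∈ H), fc h a = 1
  info_spec : ∀ (i : Fin n) (j : ℕ) (h : List ℕ), j < m i →
    (h ∈ Info i j ↔ h ∈ H ∧ P h = some i ∧ (∃ a, h ++ [a] ∈ H) ∧ infoIdx h = j)
  infoIdx_lt : ∀ (i : Fin n), ∀ h ∈ H, P h = some i → (∃ a, h ++ [a] ∈ H) → infoIdx h < m i
  info_nonempty : ∀ (i : Fin n) (j : ℕ), j < m i → (Info i j).Nonempty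
  info_actions : ∀ (i : Fin n) (j : ℕ), j < m i → ∀ h ∈ Info i j, ∀ h' ∈ Info i j,
    ∀ a : ℕ, (h ++ [a] ∈ H ↔ h' ++ [a] ∈ H)
  act_unique : ∀ (h h' : List ℕ) (a : ℕ), h ∈ H → h' ∈ H → h ++ [a] ∈ H → h' ++ [a] ∈ H →
    P h = P h' ∧ infoIdx h = infoIdx h'

namespace EFG

/-- Behavioral strategy profiles (player, information-set index, action ↦ probability). -/
abbrev Profile (G : EFG) : Type := Fin G.n → ℕ → ℕ → ℝ

/-- Belief systems (player, information-set index, history ↦ probability). -/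
abbrev Belief (G : EFG) : Type := Fin G.n → ℕ → List ℕ → ℝ

variable (G : EFG)

/-- The set `Z` of terminal histories. -/
def Zset : Finset (List ℕ) := G.H.filter fun h => ∀ a : ℕ, h ++ [a] ∉ G.H

/-- The set `A(h)` of actions available after a history. -/
def A (h : List ℕ) : Finset ℕ := G.actFinset.filter fun a => h ++ [a] ∈ G.H

/-- The common action set `A(I_i^j)` of an information set. -/
def infoA (i : Fin G.n) (j : ℕ) : Finset ℕ := (G.Info i j).sup fun h => G.A h

/-- A behavioral strategy of player `i`: a probability distribution on `A(I_i^j)` for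
each information set `I_i^j`. -/
def IsBehStrategy (i : Fin G.n) (b : ℕ → ℕ → ℝ) : Prop :=
  ∀ j < G.m i, (∀ a ∈ G.infoA i j, 0 ≤ b j a) ∧ ∑ a ∈ G.infoA i j, b j a = 1

/-- A behavioral strategy profile. -/
def IsBehProfile (β : G.Profile) : Prop := ∀ i : Fin G.n, G.IsBehStrategy i (β i)

/-- The probability of action `a` at history `h`: the chance distribution if the chance
player moves, and the mover's behavioral strategy otherwise. -/
def moveProb (β : G.Profile) (h : List ℕ) (a : ℕ) : ℝ :=
  (G.P h).elim (G.fc h a) fun i => β i (G.infoIdx h) a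

/-- Player `i`'s record `X_i` of the information sets he encounters along a history and the
actions he takes at them, accumulated starting from the prefix `pre`. -/
def recordFrom (i : Fin G.n) : List ℕ → List ℕ → List (ℕ × ℕ)
  | _, [] => []
  | pre, b :: rest =>
    (if G.P pre = some i then [(G.infoIdx pre, b)] else []) ++ recordFrom i (pre ++ [b]) rest

/-- Perfect recall. -/
def PerfectRecall : Prop :=
  ∀ (i : Fin G.n) (j : ℕ), j < G.m i →
    ∀ h ∈ G.Info i j, ∀ h' ∈ G.Info i j, G.recordFrom i [] h = G.recordFrom i [] h'

/-- Product of the move probabilities along `rest`, continuing from the prefix `pre`. -/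
def prodAlong (β : G.Profile) : List ℕ → List ℕ → ℝ
  | _, [] => 1
  | pre, b :: rest => G.moveProb β pre b * prodAlong β (pre ++ [b]) rest

/-- `ω(h|β)`: the probability that the moves along `h` are played under `β`. -/
def omega (β : G.Profile) (h : List ℕ) : ℝ := G.prodAlong β [] h

/-- `ω(I_i^j|β)`. -/
def omegaInfo (i : Fin G.n) (j : ℕ) (β : G.Profile) : ℝ := ∑ h ∈ G.Info i j, G.omega β h

/-- Product of the move probabilities along `rest` from `pre`, disregarding player `i`'s
own moves. -/
def prodAlongNot (i : Fin G.n) (β : G.Profile) : List ℕ → List ℕ → ℝ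
  | _, [] => 1
  | pre, b :: rest =>
    (if G.P pre = some i then 1 else G.moveProb β pre b) * prodAlongNot i β (pre ++ [b]) rest

/-- `S^i(h|β)`: probability of the moves along `h`, disregarding player `i`'s own moves. -/
def Sh (i : Fin G.n) (β : G.Profile) (h : List ℕ) : ℝ := G.prodAlongNot i β [] h

/-- `S^i(I_i^j|β)`. -/
def SInfo (i : Fin G.n) (j : ℕ) (β : G.Profile) : ℝ := ∑ h ∈ G.Info i j, G.Sh i β h

/-- Product of the move probabilities along `rest` from `pre`, with the factor at prefixes
lying in `I_i^j` omitted. -/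
def prodAlongSkip (i : Fin G.n) (j : ℕ) (β : G.Profile) : List ℕ → List ℕ → ℝ
  | _, [] => 1
  | pre, b :: rest =>
    (if pre ∈ G.Info i j then 1 else G.moveProb β pre b) * prodAlongSkip i j β (pre ++ [b]) rest

/-- `q ∈ M(a, I_i^j)`: `I_i^q` is a first information set of player `i` after action `a`
(every history in `I_i^q` contains `a`, with no later action of `a` lying in any action set
of player `i`). -/
def FirstAfter (i : Fin G.n) (a : ℕ) (q : ℕ) : Prop :=
  q < G.m i ∧ ∀ h ∈ G.Info i q, ∃ l₁ l₂ : List ℕ,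
    h = l₁ ++ a :: l₂ ∧ ∀ b ∈ l₂, ∀ p < G.m i, b ∉ G.infoA i p

/-- `q ∈ M(I_i^j) = ∪_{a ∈ A(I_i^j)} M(a, I_i^j)`. -/
def MInfo (i : Fin G.n) (j : ℕ) (q : ℕ) : Prop := ∃ a ∈ G.infoA i j, G.FirstAfter i a q

/-- `q ∈ Λ(a, I_i^j)`: every history in `I_i^q` contains the action `a`. -/
def LambdaSet (i : Fin G.n) (a : ℕ) (q : ℕ) : Prop :=
  q < G.m i ∧ ∀ h ∈ G.Info i q, ∃ l₁ l₂ : List ℕ, h = l₁ ++ a :: l₂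

/-- `ϱ^i_{I_i^j}(β, β̃)`: replace player `i`'s component of `β` by that of `β̃` at every
information set `I_i^q` such that some history in `I_i^q` contains an action of `A(I_i^j)`. -/
def rho (i : Fin G.n) (j : ℕ) (β βt : G.Profile) : G.Profile := fun p q =>
  if p = i ∧ ∃ h ∈ G.Info i q, ∃ b ∈ h, b ∈ G.infoA i j then βt i q else β p q

/-- A belief system: a probability distribution on each information set. -/
def IsBelief (μ : G.Belief) : Prop :=
  ∀ (i : Fin G.n) (j : ℕ), j < G.m i →
    (∀ h ∈ G.Info i j, 0 ≤ μ i j h) ∧ ∑ h ∈ G.Info i j, μ i j h = 1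

/-- A self-independent belief system for `β`:
`S^i(I_i^j|β) · μ^i_{I_i^j}(h) = S^i(h|β)`. -/
def SelfIndep (β : G.Profile) (μ : G.Belief) : Prop :=
  ∀ (i : Fin G.n) (j : ℕ), j < G.m i → ∀ h ∈ G.Info i j,
    G.SInfo i j β * μ i j h = G.Sh i β h

/-- Auxiliary for `ν`: scan `rest` from `pre` for the subhistory lying in `I_i^j`, then
weight by the belief and multiply the move probabilities of the remaining moves (the move
taken at the subhistory itself being skipped). -/
def nuAux (i : Fin G.n) (j : ℕ) (β : G.Profile) (w : List ℕ → ℝ) : List ℕ → List ℕ → ℝ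
  | _, [] => 0
  | pre, b :: rest =>
    if pre ∈ G.Info i j then w pre * G.prodAlong β (pre ++ [b]) rest
    else nuAux i j β w (pre ++ [b]) rest

/-- `ν^i_{I_i^j}(h | a, β^{-I_i^j}, μ)` (it does not involve the component of `β` at
`I_i^j`). -/
def nu (i : Fin G.n) (j : ℕ) (β : G.Profile) (μ : G.Belief) (h : List ℕ) : ℝ :=
  G.nuAux i j β (μ i j) [] h

/-- `u^i((a, β^{-I_i^j}) ∧ I_i^j)`. -/
def uWedgeAct (i : Fin G.n) (j : ℕ) (a : ℕ) (β : G.Profile) : ℝ :=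
  ∑ h ∈ G.Zset.filter (fun h => a ∈ h), G.u i h * G.prodAlongSkip i j β [] h

/-- `u^i(β ∧ I_i^j)`. -/
def uWedge (i : Fin G.n) (j : ℕ) (β : G.Profile) : ℝ :=
  ∑ h ∈ G.Zset.filter (fun h => ∃ b ∈ h, b ∈ G.infoA i j), G.u i h * G.omega β h

/-- The conditional expected payoff `u^i(a, β^{-I_i^j}, μ | I_i^j)`. -/
def uCond (i : Fin G.n) (j : ℕ) (a : ℕ) (β : G.Profile) (μ : G.Belief) : ℝ :=
  ∑ h ∈ G.Zset.filter (fun h => a ∈ h), G.u i h * G.nu i j β μ h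

/-- The expected payoff `u^i(β)`. -/
def uExp (i : Fin G.n) (β : G.Profile) : ℝ := ∑ h ∈ G.Zset, G.u i h * G.omega β h

/-- The profile obtained from `β` by replacing all of player `i`'s components by `b`. -/
def replace (β : G.Profile) (i : Fin G.n) (b : ℕ → ℕ → ℝ) : G.Profile :=
  fun p => if p = i then b else β p

/-- `β` is a Nash equilibrium in behavioral strategies. -/
def IsNash (β : G.Profile) : Prop :=
  G.IsBehProfile β ∧ ∀ (i : Fin G.n) (b : ℕ → ℕ → ℝ), G.IsBehStrategy i b →
    G.uExp i (G.replace β i b) ≤ G.uExp i β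

/-- `(β, β̃, μ)` satisfies the Nash characterization (Definition 2 of the paper). -/
def NashChar (β βt : G.Profile) (μ : G.Belief) : Prop :=
  (∀ (i : Fin G.n) (j : ℕ), j < G.m i → ∀ a' ∈ G.infoA i j, ∀ a'' ∈ G.infoA i j,
    G.uWedgeAct i j a' (G.rho i j β βt) < G.uWedgeAct i j a'' (G.rho i j β βt) →
    β i j a' = 0) ∧
  (∀ (i : Fin G.n) (j : ℕ), j < G.m i → ∀ a' ∈ G.infoA i j, ∀ a'' ∈ G.infoA i j,
    G.uCond i j a' (G.rho i j β βt) μ < G.uCond i j a'' (G.rho i j β βt) μ →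
    βt i j a' = 0) ∧
  G.IsBelief μ ∧ G.SelfIndep β μ

/-- `r` is the root of a subgame: every information set lies entirely inside or entirely
outside the set of histories extending `r`. -/
def IsSubgameRoot (r : List ℕ) : Prop :=
  r ∈ G.H ∧ ∀ (i : Fin G.n) (j : ℕ), j < G.m i →
    (∀ h ∈ G.Info i j, r <+: h) ∨ ∀ h ∈ G.Info i j, ¬ r <+: h

/-- The depth `g` of the smallest subgame containing `A(I_i^j)` (the length of the longest
subgame root preceding every history of `I_i^j`). -/
def sgDepthInfo (i : Fin G.n) (j : ℕ) : ℕ :=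
  (G.H.filter fun r => G.IsSubgameRoot r ∧ ∀ h ∈ G.Info i j, r <+: h).sup List.length

/-- The depth `q(h)` of the smallest subgame containing the last action of `h`. -/
def sgDepthHist (h : List ℕ) : ℕ :=
  (G.H.filter fun r => G.IsSubgameRoot r ∧ r <+: h.dropLast).sup List.length

/-- `C^i_{I_i^j}(h|β)`: product of move probabilities along `h` within the smallest subgame
containing `A(I_i^j)`. -/
def Ch (i : Fin G.n) (j : ℕ) (β : G.Profile) (h : List ℕ) : ℝ :=
  G.prodAlong β (h.take (G.sgDepthInfo i j)) (h.drop (G.sgDepthInfo i j))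

/-- `C^i_{I_i^j}(I_i^j|β)`. -/
def CInfo (i : Fin G.n) (j : ℕ) (β : G.Profile) : ℝ := ∑ h ∈ G.Info i j, G.Ch i j β h

/-- `u^i((a, β^{-I_i^j}) ⋄ I_i^j)`. -/
def uDiamondAct (i : Fin G.n) (j : ℕ) (a : ℕ) (β : G.Profile) : ℝ :=
  ∑ h ∈ G.Zset.filter (fun h => a ∈ h), G.u i h *
    G.prodAlongSkip i j β (h.take (G.sgDepthInfo i j)) (h.drop (G.sgDepthInfo i j))

/-- `Y^i(h|β)`: like `S^i(h|β)` but within the smallest subgame containing the last action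
of `h`. -/
def Yh (i : Fin G.n) (β : G.Profile) (h : List ℕ) : ℝ :=
  G.prodAlongNot i β (h.take (G.sgDepthHist h)) (h.drop (G.sgDepthHist h))

/-- `Y^i(I_i^j|β)`. -/
def YInfo (i : Fin G.n) (j : ℕ) (β : G.Profile) : ℝ := ∑ h ∈ G.Info i j, G.Yh i β h

/-- The belief condition `Y^i(I_i^j|β) · μ^i_{I_i^j}(h) = Y^i(h|β)`. -/
def YConsistent (β : G.Profile) (μ : G.Belief) : Prop :=
  ∀ (i : Fin G.n) (j : ℕ), j < G.m i → ∀ h ∈ G.Info i j,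
    G.YInfo i j β * μ i j h = G.Yh i β h

/-- The expected payoff of player `i` in the subgame rooted at `r` (payoffs of terminal
histories extending `r`, weighted by the move probabilities within the subgame). -/
def uExpFrom (i : Fin G.n) (β : G.Profile) (r : List ℕ) : ℝ :=
  ∑ h ∈ G.Zset.filter (fun h => r <+: h), G.u i h * G.prodAlong β r (h.drop r.length)

/-- `β` is a subgame perfect equilibrium in behavioral strategies: its restriction to every
subgame is a Nash equilibrium in behavioral strategies of that subgame. -/
def IsSubgamePerfect (β : G.Profile) : Prop :=
  G.IsBehProfile β ∧ ∀ r : List ℕ, G.IsSubgameRoot r →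
    ∀ (i : Fin G.n) (b : ℕ → ℕ → ℝ), G.IsBehStrategy i b →
      G.uExpFrom i (G.replace β i b) r ≤ G.uExpFrom i β r

/-- `(β, β̃, μ)` satisfies the subgame perfect characterization (Definition 6 of the
paper). -/
def SubgameChar (β βt : G.Profile) (μ : G.Belief) : Prop :=
  (∀ (i : Fin G.n) (j : ℕ), j < G.m i → ∀ a' ∈ G.infoA i j, ∀ a'' ∈ G.infoA i j,
    G.uDiamondAct i j a' (G.rho i j β βt) < G.uDiamondAct i j a'' (G.rho i j β βt) →
    β i j a' = 0) ∧
  (∀ (i : Fin G.n) (j : ℕ), j < G.m i → ∀ a' ∈ G.infoA i j, ∀ a'' ∈ G.infoA i j,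
    G.uCond i j a' (G.rho i j β βt) μ < G.uCond i j a'' (G.rho i j β βt) μ →
    βt i j a' = 0) ∧
  G.IsBelief μ ∧ G.YConsistent β μ

/-- `(β, μ)` is a semi-sequential equilibrium. -/
def SemiSeqEq (β : G.Profile) (μ : G.Belief) : Prop :=
  G.IsBehProfile β ∧ G.IsBelief μ ∧ G.SelfIndep β μ ∧
  ∀ (i : Fin G.n) (j : ℕ), j < G.m i → ∀ a' ∈ G.infoA i j, ∀ a'' ∈ G.infoA i j,
    G.uCond i j a' β μ < G.uCond i j a'' β μ → β i j a' = 0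

/-- `(β, μ)` is a subgame perfect semi-sequential equilibrium. -/
def SubgameSemiSeqEq (β : G.Profile) (μ : G.Belief) : Prop :=
  G.IsBehProfile β ∧ G.IsBelief μ ∧ G.YConsistent β μ ∧
  ∀ (i : Fin G.n) (j : ℕ), j < G.m i → ∀ a' ∈ G.infoA i j, ∀ a'' ∈ G.infoA i j,
    G.uCond i j a' β μ < G.uCond i j a'' β μ → β i j a' = 0

/-- `d(I_i^j)`: the number of information sets of player `i` containing a prefix of some
history of `I_i^j` (counting `I_i^j` itself). -/
def dInfo (i : Fin G.n) (j : ℕ) : ℕ :=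
  ((Finset.range (G.m i)).filter
    (fun q => ∃ h ∈ G.Info i j, ∃ p : List ℕ, p <+: h ∧ p ∈ G.Info i q)).card

end EFG

/-!
Fix consistent beliefs `μ` and build `β̃` backwards so that at every information set it maximizes
the conditional payoff against its own continuation.  Along each play, the difference of the path
probabilities under `β` and under `β` with player `i` switched to `β̃` telescopes into
contributions of the information sets `I_i^j`, in which `β` is used up to `I_i^j` and `β̃` after it.
By perfect recall and consistency of `μ`, the payoffs of the actions at `I_i^j` in this sum are
nonnegative multiples of the conditional payoffs, whatever strategy player `i` uses before `I_i^j`.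
So no contribution is positive, switching to `β̃` is a best reply in every subgame, and `β` is
subgame perfect iff all contributions vanish in every subgame.  It suffices to test the smallest
subgame containing `I_i^j`, where vanishing means that `β` at `I_i^j` maximizes the `⋄`-payoff.
The multipliers encode these two maximization conditions.
-/

/-- `p` is a probability distribution on the finite set `s`; the values of `p` outside `s` are
irrelevant. -/
def IsDistribOn {α : Type*} (s : Finset α) (p : α → ℝ) : Prop :=
  (∀ a ∈ s, 0 ≤ p a) ∧ ∑ a ∈ s, p a = 1

/-- The distribution `p` on `s` is an optimal randomization when `a ∈ s` pays `f a`: no pure choice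
pays more than `p` does on average. -/
def IsOptimalOn {α : Type*} (s : Finset α) (f p : α → ℝ) : Prop :=
  ∀ a ∈ s, f a ≤ ∑ x ∈ s, p x * f x

section Optimal

variable {α : Type*} {s : Finset α} {f g p q lam : α → ℝ} {c κ : ℝ}

theorem IsDistribOn.sum_mul_le (hp : IsDistribOn s p) (hf : ∀ a ∈ s, f a ≤ c) :
    ∑ a ∈ s, p a * f a ≤ c :=
  calc ∑ a ∈ s, p a * f a ≤ ∑ a ∈ s, p a * c :=
        Finset.sum_le_sum fun a ha ↦ mul_le_mul_of_nonneg_left (hf a ha) (hp.1 a ha)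
    _ = c := by rw [← Finset.sum_mul, hp.2, one_mul]

theorem IsOptimalOn.sum_mul_le (hp : IsOptimalOn s f p) (hq : IsDistribOn s q) :
    ∑ a ∈ s, q a * f a ≤ ∑ a ∈ s, p a * f a :=
  hq.sum_mul_le hp

theorem IsOptimalOn.congr_const_mul (hp : IsOptimalOn s f p) (hκ : 0 ≤ κ)
    (hg : ∀ a ∈ s, g a = κ * f a) : IsOptimalOn s g p := by
  intro a ha
  have hsum : ∑ x ∈ s, p x * g x = κ * ∑ x ∈ s, p x * f x := by
    rw [Finset.mul_sum]
    exact Finset.sum_congr rfl fun x hx ↦ by rw [hg x hx, mul_left_comm]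
  rw [hg a ha, hsum]
  exact mul_le_mul_of_nonneg_left (hp a ha) hκ

theorem IsOptimalOn.isOptimalOn_iff_sum_eq (hp : IsOptimalOn s f p) (hp₁ : IsDistribOn s p)
    (hq : IsDistribOn s q) :
    IsOptimalOn s f q ↔ ∑ a ∈ s, q a * f a = ∑ a ∈ s, p a * f a :=
  ⟨fun h ↦ le_antisymm (hp.sum_mul_le hq) (h.sum_mul_le hp₁), fun h a ha ↦ h ▸ hp a ha⟩

theorem IsOptimalOn.mul_sub_eq_zero (hf : IsOptimalOn s f p) (hp : IsDistribOn s p) {a : α}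
    (ha : a ∈ s) : p a * (∑ x ∈ s, p x * f x - f a) = 0 := by
  have hsum : ∑ b ∈ s, p b * (∑ x ∈ s, p x * f x - f b) = 0 := by
    simp only [mul_sub, Finset.sum_sub_distrib, ← Finset.sum_mul, hp.2, one_mul, sub_self]
  exact (Finset.sum_eq_zero_iff_of_nonneg fun b hb ↦
    mul_nonneg (hp.1 b hb) (sub_nonneg.2 (hf b hb))).1 hsum a ha

theorem IsDistribOn.isOptimalOn_of_multipliers (hp : IsDistribOn s p)
    (hf : ∀ a ∈ s, f a + lam a - c = 0) (hslack : ∀ a ∈ s, p a * lam a = 0)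
    (hlam : ∀ a ∈ s, 0 ≤ lam a) : IsOptimalOn s f p := by
  have hsum : ∑ a ∈ s, p a * f a = c := by
    rw [← one_mul c, ← hp.2, Finset.sum_mul]
    exact Finset.sum_congr rfl fun a ha ↦ by
      linear_combination p a * hf a ha - hslack a ha
  intro a ha
  linarith [hf a ha, hlam a ha]

theorem exists_isDistribOn_isOptimalOn (hs : s.Nonempty) (f : α → ℝ) :
    ∃ p, IsDistribOn s p ∧ IsOptimalOn s f p := by
  obtain ⟨x, hx, hmax⟩ := s.exists_max_image f hs
  refine ⟨fun a ↦ if a = x then 1 else 0, ⟨fun a _ ↦ ?_, ?_⟩, fun a ha ↦ ?_⟩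
  · dsimp only
    split_ifs <;> norm_num
  · simp [hx]
  · simpa [hx] using hmax a ha

theorem exists_isDistribOn_sum_mul_eq (hs : s.Nonempty) (hf : ∀ a ∈ s, 0 ≤ f a) :
    ∃ p, IsDistribOn s p ∧ ∀ a ∈ s, (∑ x ∈ s, f x) * p a = f a := by
  by_cases h0 : ∑ x ∈ s, f x = 0
  · obtain ⟨p, hp, -⟩ := exists_isDistribOn_isOptimalOn hs f
    refine ⟨p, hp, fun a ha ↦ ?_⟩
    rw [h0, zero_mul, (Finset.sum_eq_zero_iff_of_nonneg hf).1 h0 a ha]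
  · refine ⟨fun a ↦ f a / ∑ x ∈ s, f x,
      ⟨fun a ha ↦ div_nonneg (hf a ha) (Finset.sum_nonneg hf), ?_⟩, fun a _ ↦ ?_⟩
    · rw [← Finset.sum_div, div_self h0]
    · exact mul_div_cancel₀ _ h0

end Optimal

theorem exists_forall_of_wellFounded {ι α : Type*} [Nonempty α] {r : ι → ι → Prop}
    (hr : WellFounded r) {p : (ι → α) → ι → α → Prop} (hp : ∀ f j, ∃ x, p f j x)
    (hpr : ∀ f g j x, (∀ k, r k j → f k = g k) → p f j x → p g j x) :
    ∃ f, ∀ j, p f j (f j) := by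
  choose Φ hΦ using hp
  let extend (j : ι) (rec : ∀ k, r k j → α) (k : ι) : α :=
    if h : r k j then rec k h else Classical.arbitrary α
  let f : ι → α := hr.fix fun j rec ↦ Φ (extend j rec) j
  refine ⟨f, fun j ↦ hpr (extend j fun k _ ↦ f k) f j _ (fun k hk ↦ dif_pos hk) ?_⟩
  rw [show f j = Φ (extend j fun k _ ↦ f k) j from hr.fix_eq _ j]
  exact hΦ _ j

namespace EFG

variable {G : EFG} {i : Fin G.n} {j : ℕ}

/-! ### Histories and information sets -/

theorem mem_H_of_append {h t : List ℕ} (ht : h ++ t ∈ G.H) : h ∈ G.H :=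
  G.prefixClosed _ ht _ (List.prefix_append _ _)

theorem mem_H_of_append_cons {h t : List ℕ} {a : ℕ} (ht : h ++ a :: t ∈ G.H) : h ++ [a] ∈ G.H :=
  G.prefixClosed _ ht _ ⟨t, by simp⟩

theorem mem_H_of_mem_Zset {z : List ℕ} (hz : z ∈ G.Zset) : z ∈ G.H :=
  (Finset.mem_filter.1 hz).1

theorem mem_infoA {a : ℕ} : a ∈ G.infoA i j ↔ ∃ h ∈ G.Info i j, h ++ [a] ∈ G.H := by
  have mem_A (h : List ℕ) : a ∈ G.A h ↔ h ++ [a] ∈ G.H :=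
    Finset.mem_filter.trans ⟨And.right, fun ha ↦ ⟨G.act_mem _ _ ha, ha⟩⟩
  simp only [infoA, Finset.mem_sup, mem_A]

theorem mem_H_of_mem_Info (hj : j < G.m i) {h : List ℕ} (hI : h ∈ G.Info i j) : h ∈ G.H :=
  ((G.info_spec i j h hj).1 hI).1

theorem infoA_nonempty (hj : j < G.m i) : (G.infoA i j).Nonempty := by
  obtain ⟨h, hI⟩ := G.info_nonempty i j hj
  obtain ⟨-, -, ⟨a, ha⟩, -⟩ := (G.info_spec i j h hj).1 hI
  exact ⟨a, mem_infoA.2 ⟨h, hI, ha⟩⟩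

theorem mem_Info_iff_of_append (hj : j < G.m i) {h : List ℕ} {a : ℕ} (ha : h ++ [a] ∈ G.H) :
    h ∈ G.Info i j ↔ G.P h = some i ∧ G.infoIdx h = j := by
  rw [G.info_spec i j h hj]
  exact ⟨fun ⟨_, hP, _, hidx⟩ ↦ ⟨hP, hidx⟩,
    fun ⟨hP, hidx⟩ ↦ ⟨mem_H_of_append ha, hP, ⟨a, ha⟩, hidx⟩⟩

theorem infoIdx_lt_of_append {h : List ℕ} {a : ℕ} (ha : h ++ [a] ∈ G.H) (hP : G.P h = some i) :
    G.infoIdx h < G.m i :=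
  G.infoIdx_lt i h (mem_H_of_append ha) hP ⟨a, ha⟩

theorem mem_Info_infoIdx {h : List ℕ} {a : ℕ} (ha : h ++ [a] ∈ G.H) (hP : G.P h = some i) :
    h ∈ G.Info i (G.infoIdx h) :=
  (mem_Info_iff_of_append (infoIdx_lt_of_append ha hP) ha).2 ⟨hP, rfl⟩

theorem mem_infoA_iff_mem_Info (hj : j < G.m i) {h : List ℕ} {a : ℕ} (ha : h ++ [a] ∈ G.H) :
    a ∈ G.infoA i j ↔ h ∈ G.Info i j := by
  refine ⟨fun haA ↦ ?_, fun hI ↦ mem_infoA.2 ⟨h, hI, ha⟩⟩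
  obtain ⟨h', hI', ha'⟩ := mem_infoA.1 haA
  obtain ⟨hP, hidx⟩ :=
    G.act_unique h h' a (mem_H_of_append ha) (mem_H_of_append ha') ha ha'
  rw [mem_Info_iff_of_append hj ha, hP, hidx]
  exact (mem_Info_iff_of_append hj ha').1 hI'

theorem exists_eq_append_cons_of_mem (hj : j < G.m i) {pre l : List ℕ} {a : ℕ}
    (ha : a ∈ G.infoA i j) (hl : pre ++ l ∈ G.H) (hal : a ∈ l) :
    ∃ mid tl, l = mid ++ a :: tl ∧ pre ++ mid ∈ G.Info i j := by
  obtain ⟨mid, tl, rfl⟩ := List.append_of_mem hal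
  rw [← List.append_assoc] at hl
  exact ⟨mid, tl, rfl, (mem_infoA_iff_mem_Info hj (mem_H_of_append_cons hl)).1 ha⟩

/-! ### Perfect recall -/

theorem recordFrom_append (i : Fin G.n) (pre l₁ l₂ : List ℕ) :
    G.recordFrom i pre (l₁ ++ l₂) =
      G.recordFrom i pre l₁ ++ G.recordFrom i (pre ++ l₁) l₂ := by
  induction l₁ generalizing pre with
  | nil => simp [recordFrom]
  | cons x l ih => simp [recordFrom, ih]

theorem recordFrom_cons_of_mem_Info (hj : j < G.m i) {h : List ℕ} (hI : h ∈ G.Info i j)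
    (a : ℕ) (l : List ℕ) :
    G.recordFrom i h (a :: l) = (j, a) :: G.recordFrom i (h ++ [a]) l := by
  obtain ⟨-, hP, -, hidx⟩ := (G.info_spec i j h hj).1 hI
  simp [recordFrom, hP, hidx]

theorem mem_of_mem_recordFrom {pre l : List ℕ} {p : ℕ × ℕ} (hp : p ∈ G.recordFrom i pre l) :
    p.2 ∈ l := by
  induction l generalizing pre with
  | nil => simp [recordFrom] at hp
  | cons x l ih =>
    rcases List.mem_append.1 hp with hp | hp
    · split_ifs at hp <;> simp_all
    · exact List.mem_cons_of_mem _ (ih hp)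

theorem mem_of_mem_of_mem_Info (hPR : G.PerfectRecall) {q : ℕ} (hj : j < G.m i)
    (hq : q < G.m i) {h h' : List ℕ} (hI : h ∈ G.Info i q) (hI' : h' ∈ G.Info i q) {a : ℕ}
    (ha : a ∈ G.infoA i j) (hah : a ∈ h) : a ∈ h' := by
  obtain ⟨mid, tl, rfl, hmid⟩ :=
    exists_eq_append_cons_of_mem (pre := []) hj ha (mem_H_of_mem_Info hq hI) hah
  have hrec : (j, a) ∈ G.recordFrom i [] h' := by
    rw [← hPR i q hq _ hI _ hI', recordFrom_append, recordFrom_cons_of_mem_Info hj hmid]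
    simp
  exact mem_of_mem_recordFrom hrec

theorem notMem_of_mem_Info (hPR : G.PerfectRecall) (hj : j < G.m i) {h : List ℕ}
    (hI : h ∈ G.Info i j) {a : ℕ} (ha : a ∈ G.infoA i j) : a ∉ h := by
  intro hah
  obtain ⟨mid, tl, rfl, hmid⟩ :=
    exists_eq_append_cons_of_mem (pre := []) hj ha (mem_H_of_mem_Info hj hI) hah
  have hlen := congrArg List.length (hPR i j hj _ hI _ hmid)
  rw [recordFrom_append, recordFrom_cons_of_mem_Info hj hmid] at hlen
  simp at hlen

theorem notMem_Info_of_append_cons (hPR : G.PerfectRecall) (hj : j < G.m i) {pre l : List ℕ}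
    {a : ℕ} (hI : pre ++ a :: l ∈ G.Info i j) : pre ∉ G.Info i j := fun hpre ↦
  notMem_of_mem_Info hPR hj hI
    (mem_infoA.2 ⟨pre, hpre, mem_H_of_append_cons (mem_H_of_mem_Info hj hI)⟩) (by simp)

theorem eq_of_prefix_of_mem_Info (hPR : G.PerfectRecall) (hj : j < G.m i) {h h' : List ℕ}
    (hI : h ∈ G.Info i j) (hI' : h' ∈ G.Info i j) (hp : h <+: h') : h = h' := by
  obtain ⟨_ | ⟨a, t⟩, rfl⟩ := hp
  · rw [List.append_nil]
  · exact (notMem_Info_of_append_cons hPR hj hI' hI).elim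

theorem recordFrom_eq_of_mem_Info (hPR : G.PerfectRecall) (hj : j < G.m i) {r t t' : List ℕ}
    (ht : r ++ t ∈ G.Info i j) (ht' : r ++ t' ∈ G.Info i j) :
    G.recordFrom i r t = G.recordFrom i r t' := by
  have hrec := hPR i j hj _ ht _ ht'
  rwa [recordFrom_append, recordFrom_append, List.append_cancel_left_eq] at hrec

/-! ### Products of move probabilities -/

theorem moveProb_of_P_eq_some {h : List ℕ} (hP : G.P h = some i) (β : G.Profile) (a : ℕ) :
    G.moveProb β h a = β i (G.infoIdx h) a := by
  simp [moveProb, hP]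

theorem moveProb_congr {β β' : G.Profile} {h : List ℕ}
    (hβ : ∀ i, G.P h = some i → β i (G.infoIdx h) = β' i (G.infoIdx h)) (a : ℕ) :
    G.moveProb β h a = G.moveProb β' h a := by
  unfold moveProb
  cases hP : G.P h with
  | none => rfl
  | some i => exact congrFun (hβ i hP) a

theorem replace_self (β : G.Profile) (i : Fin G.n) : G.replace β i (β i) = β := by
  funext p
  by_cases hp : p = i
  · subst hp
    exact if_pos rfl
  · exact if_neg hp

theorem replace_replace (β : G.Profile) (i : Fin G.n) (b b' : ℕ → ℕ → ℝ) :
    G.replace (G.replace β i b) i b' = G.replace β i b' := by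
  funext p
  by_cases hp : p = i <;> simp [replace, hp]

theorem moveProb_replace_of_P_ne {h : List ℕ} (hP : G.P h ≠ some i) (β : G.Profile)
    (b : ℕ → ℕ → ℝ) (a : ℕ) : G.moveProb (G.replace β i b) h a = G.moveProb β h a :=
  moveProb_congr (fun _ hp ↦ by rw [replace, if_neg (by rintro rfl; exact hP hp)]) a

theorem moveProb_replace_of_P_eq {h : List ℕ} (hP : G.P h = some i) (β : G.Profile)
    (b : ℕ → ℕ → ℝ) (a : ℕ) : G.moveProb (G.replace β i b) h a = b (G.infoIdx h) a := by
  simp [moveProb_of_P_eq_some hP, replace]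

theorem moveProb_nonneg {β : G.Profile} (hβ : G.IsBehProfile β) {h : List ℕ} {a : ℕ}
    (ha : h ++ [a] ∈ G.H) : 0 ≤ G.moveProb β h a := by
  cases hP : G.P h with
  | none => simpa [moveProb, hP] using G.fc_nonneg h a
  | some i =>
    rw [moveProb_of_P_eq_some hP]
    exact (hβ i _ (infoIdx_lt_of_append ha hP)).1 a (mem_infoA.2 ⟨h, mem_Info_infoIdx ha hP, ha⟩)

theorem prodAlongSkip_append (i : Fin G.n) (j : ℕ) (β : G.Profile) (pre l₁ l₂ : List ℕ) :
    G.prodAlongSkip i j β pre (l₁ ++ l₂) =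
      G.prodAlongSkip i j β pre l₁ * G.prodAlongSkip i j β (pre ++ l₁) l₂ := by
  induction l₁ generalizing pre with
  | nil => simp [prodAlongSkip]
  | cons x l ih => simp [prodAlongSkip, ih, mul_assoc]

theorem prodAlong_congr {β β' : G.Profile} {pre l : List ℕ}
    (h : ∀ l₁ x l₂, l = l₁ ++ x :: l₂ →
      G.moveProb β (pre ++ l₁) x = G.moveProb β' (pre ++ l₁) x) :
    G.prodAlong β pre l = G.prodAlong β' pre l := by
  induction l generalizing pre with
  | nil => rfl
  | cons x l ih =>
    have hx : G.moveProb β pre x = G.moveProb β' pre x := by simpa using h [] x l rfl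
    rw [prodAlong, prodAlong, hx, ih fun l₁ y l₂ e ↦ by simpa using h (x :: l₁) y l₂ (by simp [e])]

theorem prodAlongSkip_eq_prodAlong (β : G.Profile) {pre l : List ℕ}
    (h : ∀ l₁ x l₂, l = l₁ ++ x :: l₂ → pre ++ l₁ ∉ G.Info i j) :
    G.prodAlongSkip i j β pre l = G.prodAlong β pre l := by
  induction l generalizing pre with
  | nil => rfl
  | cons x l ih =>
    have hpre : pre ∉ G.Info i j := by simpa using h [] x l rfl
    rw [prodAlong, prodAlongSkip, if_neg hpre,
      ih fun l₁ y l₂ e ↦ by simpa using h (x :: l₁) y l₂ (by simp [e])]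

theorem prodAlongNot_nonneg (i : Fin G.n) {β : G.Profile} (hβ : G.IsBehProfile β)
    {pre l : List ℕ} (hl : pre ++ l ∈ G.H) : 0 ≤ G.prodAlongNot i β pre l := by
  induction l generalizing pre with
  | nil => exact zero_le_one
  | cons x l ih =>
    refine mul_nonneg ?_ (ih (by simpa using hl))
    split_ifs
    · exact zero_le_one
    · exact moveProb_nonneg hβ (mem_H_of_append_cons hl)

theorem prodAlongSkip_nonneg (i : Fin G.n) (j : ℕ) {β : G.Profile} (hβ : G.IsBehProfile β)
    {pre l : List ℕ} (hl : pre ++ l ∈ G.H) : 0 ≤ G.prodAlongSkip i j β pre l := by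
  induction l generalizing pre with
  | nil => exact zero_le_one
  | cons x l ih =>
    refine mul_nonneg ?_ (ih (by simpa using hl))
    split_ifs
    · exact zero_le_one
    · exact moveProb_nonneg hβ (mem_H_of_append_cons hl)

/-- The contribution of player `i`'s own moves, when he uses `b`, to the probability of the moves
along `l` after `pre`: the part of `prodAlong` left out of `prodAlongNot`. -/
def ownProb (G : EFG) (i : Fin G.n) (b : ℕ → ℕ → ℝ) (pre l : List ℕ) : ℝ :=
  ((G.recordFrom i pre l).map fun p ↦ b p.1 p.2).prod

theorem prodAlong_replace (i : Fin G.n) (β : G.Profile) (b : ℕ → ℕ → ℝ) (pre l : List ℕ) :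
    G.prodAlong (G.replace β i b) pre l = G.ownProb i b pre l * G.prodAlongNot i β pre l := by
  induction l generalizing pre with
  | nil => simp [prodAlong, prodAlongNot, ownProb, recordFrom]
  | cons x l ih =>
    rw [prodAlong, prodAlongNot, ih]
    by_cases hP : G.P pre = some i
    · simp [ownProb, recordFrom, hP, moveProb_replace_of_P_eq, mul_assoc]
    · simp [ownProb, recordFrom, hP, moveProb_replace_of_P_ne, mul_left_comm]

theorem ownProb_nonneg {b : ℕ → ℕ → ℝ} (hb : G.IsBehStrategy i b) {pre l : List ℕ}
    (hl : pre ++ l ∈ G.H) : 0 ≤ G.ownProb i b pre l := by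
  induction l generalizing pre with
  | nil => simp [ownProb, recordFrom]
  | cons x l ih =>
    have htail : 0 ≤ G.ownProb i b (pre ++ [x]) l := ih (by simpa using hl)
    by_cases hP : G.P pre = some i
    · have hx := mem_H_of_append_cons hl
      have hhead : 0 ≤ b (G.infoIdx pre) x :=
        (hb _ (infoIdx_lt_of_append hx hP)).1 x (mem_infoA.2 ⟨pre, mem_Info_infoIdx hx hP, hx⟩)
      simpa [ownProb, recordFrom, hP] using mul_nonneg hhead htail
    · simpa [ownProb, recordFrom, hP] using htail

/-! ### The profile `ϱ` along a history -/

theorem moveProb_rho_before (hPR : G.PerfectRecall) (hj : j < G.m i) (β βt : G.Profile)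
    {pre l : List ℕ} {x : ℕ} (hI : pre ++ x :: l ∈ G.Info i j) :
    G.moveProb (G.rho i j β βt) pre x = G.moveProb β pre x := by
  refine moveProb_congr (fun p hP ↦ if_neg ?_) x
  rintro ⟨rfl, h, hh, a, hah, haA⟩
  have hx := mem_H_of_append_cons (mem_H_of_mem_Info hj hI)
  have ha : a ∈ pre := mem_of_mem_of_mem_Info hPR hj (infoIdx_lt_of_append hx hP) hh
    (mem_Info_infoIdx hx hP) haA hah
  exact notMem_of_mem_Info hPR hj hI haA (by simp [ha])

theorem moveProb_rho_after (β βt : G.Profile) {h : List ℕ} {a x : ℕ} (hx : h ++ [x] ∈ G.H)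
    (ha : a ∈ G.infoA i j) (hah : a ∈ h) :
    G.moveProb (G.rho i j β βt) h x = G.moveProb (G.replace β i (βt i)) h x := by
  refine moveProb_congr (fun p hP ↦ ?_) x
  by_cases hp : p = i
  · subst hp
    rw [rho, if_pos ⟨rfl, h, mem_Info_infoIdx hx hP, a, hah, ha⟩]
    simp [replace]
  · simp [rho, replace, hp]

theorem prodAlong_rho_after (β βt : G.Profile) {pre l : List ℕ} {a : ℕ} (hl : pre ++ l ∈ G.H)
    (ha : a ∈ G.infoA i j) (hap : a ∈ pre) :
    G.prodAlong (G.rho i j β βt) pre l = G.prodAlong (G.replace β i (βt i)) pre l := by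
  refine prodAlong_congr ?_
  rintro l₁ x l₂ rfl
  rw [← List.append_assoc] at hl
  exact moveProb_rho_after β βt (mem_H_of_append_cons hl) ha (List.mem_append_left _ hap)

theorem prodAlongSkip_rho_before (hPR : G.PerfectRecall) (hj : j < G.m i) (β βt : G.Profile)
    {pre l : List ℕ} (hI : pre ++ l ∈ G.Info i j) :
    G.prodAlongSkip i j (G.rho i j β βt) pre l = G.prodAlong β pre l := by
  rw [prodAlongSkip_eq_prodAlong]
  · refine prodAlong_congr ?_
    rintro l₁ x l₂ rfl
    rw [← List.append_assoc] at hI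
    exact moveProb_rho_before hPR hj β βt hI
  · rintro l₁ x l₂ rfl
    rw [← List.append_assoc] at hI
    exact notMem_Info_of_append_cons hPR hj hI

theorem prodAlongSkip_rho (hPR : G.PerfectRecall) (hj : j < G.m i) (β βt : G.Profile)
    {pre mid tl : List ℕ} {a : ℕ} (hI : pre ++ mid ∈ G.Info i j)
    (hz : pre ++ (mid ++ a :: tl) ∈ G.H) :
    G.prodAlongSkip i j (G.rho i j β βt) pre (mid ++ a :: tl) =
      G.prodAlong β pre mid *
        G.prodAlong (G.replace β i (βt i)) (pre ++ mid ++ [a]) tl := by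
  rw [← List.append_assoc] at hz
  have ha := mem_infoA.2 ⟨_, hI, mem_H_of_append_cons hz⟩
  rw [prodAlongSkip_append, prodAlongSkip_rho_before hPR hj β βt hI, prodAlongSkip, if_pos hI,
    one_mul, prodAlongSkip_eq_prodAlong, prodAlong_rho_after β βt (by simpa using hz) ha (by simp)]
  exact fun l₁ x l₂ _ hI' ↦ notMem_of_mem_Info hPR hj hI' ha (by simp)

theorem nuAux_append_cons (hPR : G.PerfectRecall) (hj : j < G.m i) (β : G.Profile)
    (w : List ℕ → ℝ) {pre mid tl : List ℕ} {a : ℕ} (hI : pre ++ mid ∈ G.Info i j) :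
    G.nuAux i j β w pre (mid ++ a :: tl) =
      w (pre ++ mid) * G.prodAlong β (pre ++ mid ++ [a]) tl := by
  induction mid generalizing pre with
  | nil => simp_all [nuAux]
  | cons x l ih =>
    rw [List.cons_append, nuAux, if_neg (notMem_Info_of_append_cons hPR hj hI),
      ih (by simpa using hI)]
    simp

theorem nu_rho (hPR : G.PerfectRecall) (hj : j < G.m i) (β βt : G.Profile) (μ : G.Belief)
    {h tl : List ℕ} {a : ℕ} (hI : h ∈ G.Info i j) (hz : h ++ a :: tl ∈ G.H) :
    G.nu i j (G.rho i j β βt) μ (h ++ a :: tl) =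
      μ i j h * G.prodAlong (G.replace β i (βt i)) (h ++ [a]) tl := by
  have ha := mem_infoA.2 ⟨h, hI, mem_H_of_append_cons hz⟩
  rw [nu, nuAux_append_cons (pre := []) hPR hj _ _ hI, List.nil_append,
    prodAlong_rho_after β βt (by simpa using hz) ha (by simp)]

/-! ### Comparing two strategies of one player -/

theorem prodAlongSkip_rho_cons_self (hPR : G.PerfectRecall) (hj : j < G.m i) (β βt : G.Profile)
    {pre l : List ℕ} {a : ℕ} (ha : a ∈ G.infoA i j) (hl : pre ++ a :: l ∈ G.H) :
    G.prodAlongSkip i j (G.rho i j β βt) pre (a :: l) =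
      G.prodAlong (G.replace β i (βt i)) (pre ++ [a]) l := by
  have hI := (mem_infoA_iff_mem_Info hj (mem_H_of_append_cons hl)).1 ha
  simpa [prodAlong] using
    prodAlongSkip_rho (mid := []) hPR hj β βt (by simpa using hI) (by simpa using hl)

theorem prodAlongSkip_rho_cons_of_mem (hPR : G.PerfectRecall) (hj : j < G.m i)
    (β βt : G.Profile) {pre l : List ℕ} {a x : ℕ} (ha : a ∈ G.infoA i j) (hal : a ∈ l)
    (hl : pre ++ x :: l ∈ G.H) :
    G.prodAlongSkip i j (G.rho i j β βt) pre (x :: l) =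
      G.moveProb β pre x * G.prodAlongSkip i j (G.rho i j β βt) (pre ++ [x]) l := by
  obtain ⟨mid, tl, rfl, hI⟩ :=
    exists_eq_append_cons_of_mem (pre := pre ++ [x]) hj ha (by simpa using hl) hal
  rw [prodAlongSkip, if_neg (notMem_Info_of_append_cons hPR hj (by simpa using hI)),
    moveProb_rho_before hPR hj β βt (by simpa using hI)]

theorem notMem_tail_of_mem_infoA (hPR : G.PerfectRecall) (hj : j < G.m i) {pre l : List ℕ}
    {a : ℕ} (ha : a ∈ G.infoA i j) (hl : pre ++ a :: l ∈ G.H) : a ∉ l := by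
  intro hal
  obtain ⟨mid, tl, rfl, hI⟩ :=
    exists_eq_append_cons_of_mem (pre := pre ++ [a]) hj ha (by simpa using hl) hal
  exact notMem_of_mem_Info hPR hj hI ha (by simp)

theorem sum_infoA_ite_eq {pre : List ℕ} {x : ℕ} (hx : pre ++ [x] ∈ G.H) (d : ℕ → ℕ → ℝ) :
    ∑ j ∈ Finset.range (G.m i), ∑ a ∈ G.infoA i j, (if a = x then d j a else 0) =
      if G.P pre = some i then d (G.infoIdx pre) x else 0 := by
  have hinner : ∀ j ∈ Finset.range (G.m i),
      ∑ a ∈ G.infoA i j, (if a = x then d j a else 0) =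
        if G.P pre = some i ∧ G.infoIdx pre = j then d j x else 0 := by
    intro j hj
    simp only [Finset.sum_ite_eq', mem_infoA_iff_mem_Info (Finset.mem_range.1 hj) hx,
      mem_Info_iff_of_append (Finset.mem_range.1 hj) hx]
  rw [Finset.sum_congr rfl hinner]
  by_cases hP : G.P pre = some i
  · simp [hP, infoIdx_lt_of_append hx hP]
  · simp [hP]

theorem moveProb_sub_moveProb_replace {pre : List ℕ} {x : ℕ} (hx : pre ++ [x] ∈ G.H)
    (β : G.Profile) (b : ℕ → ℕ → ℝ) :
    G.moveProb β pre x - G.moveProb (G.replace β i b) pre x =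
      ∑ j ∈ Finset.range (G.m i), ∑ a ∈ G.infoA i j,
        if a = x then β i j a - b j a else 0 := by
  rw [sum_infoA_ite_eq hx fun j a ↦ β i j a - b j a]
  split_ifs with hP
  · rw [moveProb_of_P_eq_some hP, moveProb_replace_of_P_eq hP]
  · rw [moveProb_replace_of_P_ne hP, sub_self]

-- The summand for `(j, a)` uses `β` up to the move `a` and `β̃` after it, so the sum telescopes.
theorem prodAlong_sub_prodAlong_replace (hPR : G.PerfectRecall) (β βt : G.Profile)
    {pre l : List ℕ} (hl : pre ++ l ∈ G.H) :
    G.prodAlong β pre l - G.prodAlong (G.replace β i (βt i)) pre l =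
      ∑ j ∈ Finset.range (G.m i), ∑ a ∈ G.infoA i j,
        if a ∈ l then
          (β i j a - βt i j a) * G.prodAlongSkip i j (G.rho i j β βt) pre l else 0 := by
  induction l generalizing pre with
  | nil => simp [prodAlong]
  | cons x l ih =>
    have hterm : ∀ j ∈ Finset.range (G.m i), ∀ a ∈ G.infoA i j,
        (if a ∈ x :: l then
          (β i j a - βt i j a) * G.prodAlongSkip i j (G.rho i j β βt) pre (x :: l) else 0) =
        (if a = x then β i j a - βt i j a else 0) *
            G.prodAlong (G.replace β i (βt i)) (pre ++ [x]) l +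
          G.moveProb β pre x * (if a ∈ l then
            (β i j a - βt i j a) * G.prodAlongSkip i j (G.rho i j β βt) (pre ++ [x]) l
            else 0) := by
      intro j hj a ha
      rw [Finset.mem_range] at hj
      by_cases hax : a = x
      · subst hax
        simp [notMem_tail_of_mem_infoA hPR hj ha hl,
          prodAlongSkip_rho_cons_self hPR hj β βt ha hl]
      by_cases hal : a ∈ l
      · simp [hax, hal, prodAlongSkip_rho_cons_of_mem hPR hj β βt ha hal hl, mul_left_comm]
      · simp [hax, hal]
    rw [Finset.sum_congr rfl fun j hj ↦ Finset.sum_congr rfl (hterm j hj)]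
    simp only [Finset.sum_add_distrib, ← Finset.sum_mul, ← Finset.mul_sum]
    rw [← moveProb_sub_moveProb_replace (mem_H_of_append_cons hl),
      ← ih (by simpa using hl), prodAlong, prodAlong]
    ring

/-- The payoff `u^i((a, β^{-I_i^j}) ⋄ I_i^j)` with the smallest subgame containing `A(I_i^j)`
replaced by the subgame rooted at `r`. -/
def uActFrom (G : EFG) (i : Fin G.n) (j a : ℕ) (r : List ℕ) (β : G.Profile) : ℝ :=
  ∑ h ∈ G.Zset.filter (fun h ↦ r <+: h ∧ a ∈ h.drop r.length),
    G.u i h * G.prodAlongSkip i j β r (h.drop r.length)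

theorem uExpFrom_sub_uExpFrom_replace (hPR : G.PerfectRecall) (i : Fin G.n) (β βt : G.Profile)
    (r : List ℕ) :
    G.uExpFrom i β r - G.uExpFrom i (G.replace β i (βt i)) r =
      ∑ j ∈ Finset.range (G.m i), ∑ a ∈ G.infoA i j,
        (β i j a - βt i j a) * G.uActFrom i j a r (G.rho i j β βt) := by
  have hterm : ∀ h ∈ G.Zset.filter (fun h ↦ r <+: h),
      G.u i h * G.prodAlong β r (h.drop r.length) -
          G.u i h * G.prodAlong (G.replace β i (βt i)) r (h.drop r.length) =
        ∑ j ∈ Finset.range (G.m i), ∑ a ∈ G.infoA i j,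
          if a ∈ h.drop r.length then (β i j a - βt i j a) *
            (G.u i h * G.prodAlongSkip i j (G.rho i j β βt) r (h.drop r.length)) else 0 := by
    intro h hh
    obtain ⟨hz, t, rfl⟩ := Finset.mem_filter.1 hh
    rw [List.drop_left, ← mul_sub,
      prodAlong_sub_prodAlong_replace hPR β βt (mem_H_of_mem_Zset hz)]
    simp only [Finset.mul_sum, mul_ite, mul_zero, mul_left_comm]
  rw [uExpFrom, uExpFrom, ← Finset.sum_sub_distrib, Finset.sum_congr rfl hterm, Finset.sum_comm]
  refine Finset.sum_congr rfl fun j _ ↦ ?_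
  rw [Finset.sum_comm]
  refine Finset.sum_congr rfl fun a _ ↦ ?_
  rw [← Finset.sum_filter, Finset.filter_filter, uActFrom, Finset.mul_sum]

theorem uActFrom_eq_zero (hj : j < G.m i) {a : ℕ} (ha : a ∈ G.infoA i j) {r : List ℕ}
    (hr : ∀ h ∈ G.Info i j, ¬ r <+: h) (β : G.Profile) : G.uActFrom i j a r β = 0 := by
  rw [uActFrom, Finset.filter_eq_empty_iff.2, Finset.sum_empty]
  rintro h hz ⟨⟨t, rfl⟩, hat⟩
  rw [List.drop_left] at hat
  obtain ⟨mid, tl, rfl, hI⟩ := exists_eq_append_cons_of_mem hj ha (mem_H_of_mem_Zset hz) hat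
  exact hr _ hI (List.prefix_append _ _)

theorem exists_eq_append_append_cons (hj : j < G.m i) {a : ℕ} (ha : a ∈ G.infoA i j)
    {r : List ℕ} (hr : ∀ h ∈ G.Info i j, r <+: h) {z : List ℕ} (hz : z ∈ G.H) (haz : a ∈ z) :
    ∃ mid tl, z = r ++ (mid ++ a :: tl) ∧ r ++ mid ∈ G.Info i j := by
  obtain ⟨pre, tl, rfl, hI⟩ := exists_eq_append_cons_of_mem (pre := []) hj ha hz haz
  obtain ⟨mid, rfl⟩ := hr _ hI
  exact ⟨mid, tl, by simp, hI⟩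

theorem uActFrom_eq_sum_filter_mem (hj : j < G.m i) {a : ℕ} (ha : a ∈ G.infoA i j)
    {r : List ℕ} (hr : ∀ h ∈ G.Info i j, r <+: h) (β : G.Profile) :
    G.uActFrom i j a r β = ∑ h ∈ G.Zset.filter (fun h ↦ a ∈ h),
      G.u i h * G.prodAlongSkip i j β r (h.drop r.length) := by
  refine Finset.sum_congr (Finset.filter_congr fun z hz ↦
    ⟨fun h ↦ List.mem_of_mem_drop h.2, fun haz ↦ ?_⟩) fun _ _ ↦ rfl
  obtain ⟨mid, tl, rfl, -⟩ := exists_eq_append_append_cons hj ha hr (mem_H_of_mem_Zset hz) haz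
  simp

theorem uActFrom_eq_prodAlongSkip_mul (hj : j < G.m i) {a : ℕ} (ha : a ∈ G.infoA i j)
    {r s : List ℕ} (hrs : ∀ h ∈ G.Info i j, r ++ s <+: h) (β : G.Profile) :
    G.uActFrom i j a r β = G.prodAlongSkip i j β r s * G.uActFrom i j a (r ++ s) β := by
  rw [uActFrom_eq_sum_filter_mem hj ha fun h hI ↦ (List.prefix_append r s).trans (hrs h hI),
    uActFrom_eq_sum_filter_mem hj ha hrs, Finset.mul_sum]
  refine Finset.sum_congr rfl fun z hz ↦ ?_
  obtain ⟨hz, haz⟩ := Finset.mem_filter.1 hz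
  obtain ⟨mid, tl, rfl, -⟩ := exists_eq_append_append_cons hj ha hrs (mem_H_of_mem_Zset hz) haz
  rw [List.drop_left, List.append_assoc r, List.drop_left, prodAlongSkip_append, mul_left_comm]

/-! ### The smallest subgame containing an information set -/

/-- `R` is the root of the smallest subgame containing the information set `I_i^j`. -/
structure IsSmallestSubgameRoot (G : EFG) (i : Fin G.n) (j : ℕ) (R : List ℕ) : Prop where
  isSubgameRoot : G.IsSubgameRoot R
  prefix_of_mem_Info : ∀ h ∈ G.Info i j, R <+: h
  prefix_of_isSubgameRoot : ∀ r, G.IsSubgameRoot r → (∀ h ∈ G.Info i j, r <+: h) → r <+: R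

theorem isSubgameRoot_nil : G.IsSubgameRoot [] :=
  ⟨G.empty_mem, fun _ _ _ ↦ Or.inl fun _ _ ↦ List.nil_prefix⟩

theorem exists_isSmallestSubgameRoot (hj : j < G.m i) : ∃ R, G.IsSmallestSubgameRoot i j R := by
  obtain ⟨h, hI⟩ := G.info_nonempty i j hj
  obtain ⟨R, hR, hmax⟩ :=
    (G.H.filter fun r ↦ G.IsSubgameRoot r ∧ ∀ h ∈ G.Info i j, r <+: h).exists_max_image
      List.length ⟨[], by simp [G.empty_mem, isSubgameRoot_nil]⟩
  simp only [Finset.mem_filter] at hR hmax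
  exact ⟨R, hR.2.1, hR.2.2, fun r hr hrI ↦
    List.prefix_of_prefix_length_le (hrI h hI) (hR.2.2 h hI) (hmax r ⟨hr.1, hr, hrI⟩)⟩

namespace IsSmallestSubgameRoot

variable {R : List ℕ}

theorem length_eq_sgDepthInfo (hR : G.IsSmallestSubgameRoot i j R) :
    R.length = G.sgDepthInfo i j := by
  refine le_antisymm (Finset.le_sup (f := List.length) (Finset.mem_filter.2
    ⟨hR.isSubgameRoot.1, hR.isSubgameRoot, hR.prefix_of_mem_Info⟩)) (Finset.sup_le fun r hr ↦ ?_)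
  obtain ⟨-, hr, hrI⟩ := Finset.mem_filter.1 hr
  exact (hR.prefix_of_isSubgameRoot r hr hrI).length_le

theorem isSubgameRoot_prefix_dropLast_iff (hR : G.IsSmallestSubgameRoot i j R) (hj : j < G.m i)
    (hRI : R ∉ G.Info i j) {h r : List ℕ} (hI : h ∈ G.Info i j) (hr : G.IsSubgameRoot r) :
    r <+: h.dropLast ↔ ∀ h' ∈ G.Info i j, r <+: h' := by
  refine ⟨fun hrh ↦ (hr.2 i j hj).resolve_right fun hout ↦
    hout h hI (hrh.trans h.dropLast_prefix), fun hin ↦ ?_⟩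
  obtain ⟨t, rfl⟩ := hin h hI
  have ht : t ≠ [] := by
    rintro rfl
    rw [List.append_nil] at hI
    have hrR : r = R := (hR.prefix_of_isSubgameRoot r hr hin).eq_of_length_le
      (hR.prefix_of_mem_Info r hI).length_le
    exact hRI (hrR ▸ hI)
  rw [List.dropLast_append_of_ne_nil ht]
  exact List.prefix_append _ _

theorem sgDepthHist_eq (hR : G.IsSmallestSubgameRoot i j R) (hj : j < G.m i)
    (hRI : R ∉ G.Info i j) {h : List ℕ} (hI : h ∈ G.Info i j) : G.sgDepthHist h = R.length := by
  rw [hR.length_eq_sgDepthInfo, sgDepthHist, sgDepthInfo]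
  congr 1
  exact Finset.filter_congr fun r _ ↦ and_congr_right fun hr ↦
    hR.isSubgameRoot_prefix_dropLast_iff hj hRI hI hr

theorem uDiamondAct_eq_uActFrom (hR : G.IsSmallestSubgameRoot i j R) (hj : j < G.m i) {a : ℕ}
    (ha : a ∈ G.infoA i j) (β : G.Profile) : G.uDiamondAct i j a β = G.uActFrom i j a R β := by
  rw [uActFrom_eq_sum_filter_mem hj ha hR.prefix_of_mem_Info, uDiamondAct,
    ← hR.length_eq_sgDepthInfo]
  refine Finset.sum_congr rfl fun z hz ↦ ?_
  obtain ⟨hz, haz⟩ := Finset.mem_filter.1 hz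
  obtain ⟨mid, tl, rfl, -⟩ :=
    exists_eq_append_append_cons hj ha hR.prefix_of_mem_Info (mem_H_of_mem_Zset hz) haz
  rw [List.take_left]

end IsSmallestSubgameRoot

theorem exists_uActFrom_eq_mul_uDiamondAct (hj : j < G.m i) {β : G.Profile}
    (hβ : G.IsBehProfile β) {r : List ℕ} (hr : G.IsSubgameRoot r) :
    ∃ κ : ℝ, 0 ≤ κ ∧ ∀ a ∈ G.infoA i j, G.uActFrom i j a r β = κ * G.uDiamondAct i j a β := by
  obtain ⟨R, hR⟩ := exists_isSmallestSubgameRoot hj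
  rcases hr.2 i j hj with hin | hout
  · obtain ⟨s, rfl⟩ := hR.prefix_of_isSubgameRoot r hr hin
    refine ⟨G.prodAlongSkip i j β r s, prodAlongSkip_nonneg i j hβ hR.isSubgameRoot.1,
      fun a ha ↦ ?_⟩
    rw [hR.uDiamondAct_eq_uActFrom hj ha,
      uActFrom_eq_prodAlongSkip_mul hj ha hR.prefix_of_mem_Info]
  · exact ⟨0, le_rfl, fun a ha ↦ by rw [uActFrom_eq_zero hj ha hout, zero_mul]⟩

/-! ### Beliefs -/

theorem Yh_nonneg (i : Fin G.n) {β : G.Profile} (hβ : G.IsBehProfile β) {h : List ℕ}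
    (hh : h ∈ G.H) : 0 ≤ G.Yh i β h :=
  prodAlongNot_nonneg i hβ (by rwa [List.take_append_drop])

theorem exists_isBelief_yConsistent {β : G.Profile} (hβ : G.IsBehProfile β) :
    ∃ μ : G.Belief, G.IsBelief μ ∧ G.YConsistent β μ := by
  have hex (i : Fin G.n) (j : ℕ) : ∃ p, j < G.m i →
      IsDistribOn (G.Info i j) p ∧ ∀ h ∈ G.Info i j, G.YInfo i j β * p h = G.Yh i β h := by
    by_cases hj : j < G.m i
    · obtain ⟨p, hp⟩ := exists_isDistribOn_sum_mul_eq (G.info_nonempty i j hj)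
        fun h hI ↦ Yh_nonneg i hβ (mem_H_of_mem_Info hj hI)
      exact ⟨p, fun _ ↦ hp⟩
    · exact ⟨0, fun hj' ↦ absurd hj' hj⟩
  choose μ hμ using hex
  exact ⟨μ, fun i j hj ↦ (hμ i j hj).1, fun i j hj ↦ (hμ i j hj).2⟩

theorem IsSmallestSubgameRoot.exists_prodAlongNot_eq_mul (hPR : G.PerfectRecall) {R : List ℕ}
    (hR : G.IsSmallestSubgameRoot i j R) (hj : j < G.m i) {β : G.Profile}
    (hβ : G.IsBehProfile β) {μ : G.Belief} (hμ : G.IsBelief μ) (hY : G.YConsistent β μ) :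
    ∃ κ : ℝ, 0 ≤ κ ∧
      ∀ t, R ++ t ∈ G.Info i j → G.prodAlongNot i β R t = κ * μ i j (R ++ t) := by
  by_cases hRI : R ∈ G.Info i j
  · have heq : ∀ h ∈ G.Info i j, h = R := fun h hI ↦
      (eq_of_prefix_of_mem_Info hPR hj hRI hI (hR.prefix_of_mem_Info h hI)).symm
    have hμR : μ i j R = 1 := by
      rw [← (hμ i j hj).2, Finset.eq_singleton_iff_unique_mem.2 ⟨hRI, heq⟩, Finset.sum_singleton]
    refine ⟨1, zero_le_one, fun t ht ↦ ?_⟩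
    rw [heq _ ht, hμR, List.append_right_eq_self.1 (heq _ ht), prodAlongNot, one_mul]
  · refine ⟨G.YInfo i j β,
      Finset.sum_nonneg fun h hI ↦ Yh_nonneg i hβ (mem_H_of_mem_Info hj hI), fun t ht ↦ ?_⟩
    rw [hY i j hj _ ht, Yh, hR.sgDepthHist_eq hj hRI ht, List.take_left, List.drop_left]

theorem exists_uDiamondAct_eq_mul_uCond (hPR : G.PerfectRecall) (hj : j < G.m i)
    {β : G.Profile} (hβ : G.IsBehProfile β) {μ : G.Belief} (hμ : G.IsBelief μ)
    (hY : G.YConsistent β μ) {b : ℕ → ℕ → ℝ} (hb : G.IsBehStrategy i b) (βt : G.Profile) :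
    ∃ κ : ℝ, 0 ≤ κ ∧ ∀ a ∈ G.infoA i j,
      G.uDiamondAct i j a (G.rho i j (G.replace β i b) βt) =
        κ * G.uCond i j a (G.rho i j β βt) μ := by
  obtain ⟨R, hR⟩ := exists_isSmallestSubgameRoot hj
  obtain ⟨κ, hκ, hκμ⟩ := hR.exists_prodAlongNot_eq_mul hPR hj hβ hμ hY
  obtain ⟨h, hI⟩ := G.info_nonempty i j hj
  obtain ⟨t, rfl⟩ := hR.prefix_of_mem_Info h hI
  refine ⟨G.ownProb i b R t * κ,
    mul_nonneg (ownProb_nonneg hb (mem_H_of_mem_Info hj hI)) hκ, fun a ha ↦ ?_⟩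
  rw [hR.uDiamondAct_eq_uActFrom hj ha,
    uActFrom_eq_sum_filter_mem hj ha hR.prefix_of_mem_Info, uCond, Finset.mul_sum]
  refine Finset.sum_congr rfl fun z hz ↦ ?_
  obtain ⟨hz, haz⟩ := Finset.mem_filter.1 hz
  obtain ⟨mid, tl, rfl, hmid⟩ :=
    exists_eq_append_append_cons hj ha hR.prefix_of_mem_Info (mem_H_of_mem_Zset hz) haz
  have hown : G.ownProb i b R mid = G.ownProb i b R t := by
    rw [ownProb, ownProb, recordFrom_eq_of_mem_Info hPR hj hmid hI]
  have hnu := nu_rho hPR hj β βt μ hmid (by simpa using mem_H_of_mem_Zset hz)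
  rw [List.append_assoc] at hnu
  rw [List.drop_left, prodAlongSkip_rho hPR hj _ _ hmid (mem_H_of_mem_Zset hz), replace_replace,
    prodAlong_replace, hown, hκμ mid hmid, hnu]
  ring

/-! ### Backward induction -/

/-- The information set `x` comes after `y` in the game tree: both belong to the same player and
some history in `x` contains an action available at `y`. -/
def Follows (G : EFG) (x y : Σ i : Fin G.n, Fin (G.m i)) : Prop :=
  x.1 = y.1 ∧ ∃ h ∈ G.Info x.1 x.2, ∃ a ∈ h, a ∈ G.infoA y.1 y.2

theorem wellFounded_follows (hPR : G.PerfectRecall) : WellFounded G.Follows := by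
  have : IsTrans _ G.Follows := ⟨by
    rintro ⟨i, x⟩ ⟨_, y⟩ ⟨_, z⟩ ⟨rfl, h, hI, a, hah, ha⟩ ⟨rfl, h', hI', b, hbh', hb⟩
    obtain ⟨mid, tl, rfl, hmid⟩ :=
      exists_eq_append_cons_of_mem (pre := []) y.2 ha (mem_H_of_mem_Info x.2 hI) hah
    have hbmid : b ∈ mid := mem_of_mem_of_mem_Info hPR z.2 y.2 hI' hmid hb hbh'
    exact ⟨rfl, _, hI, b, by simp [hbmid], hb⟩⟩
  have : Std.Irrefl G.Follows := ⟨by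
    rintro x ⟨-, h, hI, a, hah, ha⟩
    exact notMem_of_mem_Info hPR x.2.2 hI ha hah⟩
  exact Finite.wellFounded_of_trans_of_irrefl _

theorem uCond_rho_congr (hPR : G.PerfectRecall) (hj : j < G.m i) {a : ℕ}
    (ha : a ∈ G.infoA i j) (β : G.Profile) {βt βt' : G.Profile} (μ : G.Belief)
    (hβt : ∀ q : Fin (G.m i), G.Follows ⟨i, q⟩ ⟨i, ⟨j, hj⟩⟩ → βt i q = βt' i q) :
    G.uCond i j a (G.rho i j β βt) μ = G.uCond i j a (G.rho i j β βt') μ := by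
  refine Finset.sum_congr rfl fun z hz ↦ congrArg (G.u i z * ·) ?_
  obtain ⟨hz, haz⟩ := Finset.mem_filter.1 hz
  replace hz := mem_H_of_mem_Zset hz
  obtain ⟨mid, tl, rfl, hI⟩ := exists_eq_append_cons_of_mem (pre := []) hj ha hz haz
  rw [List.nil_append] at hI
  rw [nu_rho hPR hj β βt μ hI hz, nu_rho hPR hj β βt' μ hI hz]
  congr 1
  refine prodAlong_congr ?_
  rintro l₁ x l₂ rfl
  have hx : mid ++ [a] ++ l₁ ++ [x] ∈ G.H := mem_H_of_append_cons (t := l₂) (by simpa using hz)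
  refine moveProb_congr (fun p hP ↦ ?_) x
  by_cases hp : p = i
  · subst hp
    simpa [replace] using hβt ⟨_, infoIdx_lt_of_append hx hP⟩
      ⟨rfl, _, mem_Info_infoIdx hx hP, a, by simp, ha⟩
  · simp [replace, hp]

theorem exists_isBehProfile_isOptimalOn_uCond (hPR : G.PerfectRecall) (β : G.Profile)
    (μ : G.Belief) : ∃ βt : G.Profile, G.IsBehProfile βt ∧ ∀ i, ∀ j < G.m i,
      IsOptimalOn (G.infoA i j) (fun a ↦ G.uCond i j a (G.rho i j β βt) μ) (βt i j) := by
  let ext (f : (Σ i : Fin G.n, Fin (G.m i)) → ℕ → ℝ) : G.Profile :=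
    fun i j ↦ if hj : j < G.m i then f ⟨i, ⟨j, hj⟩⟩ else 0
  have ext_apply f i (j) (hj : j < G.m i) : ext f i j = f ⟨i, ⟨j, hj⟩⟩ := dif_pos hj
  obtain ⟨f, hf⟩ := exists_forall_of_wellFounded (wellFounded_follows hPR)
    (p := fun f x p ↦ IsDistribOn (G.infoA x.1 x.2) p ∧ IsOptimalOn (G.infoA x.1 x.2)
      (fun a ↦ G.uCond x.1 x.2 a (G.rho x.1 x.2 β (ext f)) μ) p)
    (fun f x ↦ exists_isDistribOn_isOptimalOn (infoA_nonempty x.2.2) _) <| by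
      rintro f g ⟨i, j⟩ p hfg ⟨hp, hopt⟩
      refine ⟨hp, hopt.congr_const_mul zero_le_one fun a ha ↦ ?_⟩
      rw [one_mul]
      refine uCond_rho_congr hPR j.2 ha β μ fun q hq ↦ ?_
      rw [ext_apply g i q q.2, ext_apply f i q q.2, hfg _ hq]
  refine ⟨ext f, fun i j hj ↦ ?_, fun i j hj ↦ ?_⟩ <;> rw [ext_apply f i j hj]
  exacts [(hf ⟨i, ⟨j, hj⟩⟩).1, (hf ⟨i, ⟨j, hj⟩⟩).2]

/-! ### Subgame perfection -/

theorem isBehProfile_replace {β : G.Profile} (hβ : G.IsBehProfile β) {b : ℕ → ℕ → ℝ}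
    (hb : G.IsBehStrategy i b) : G.IsBehProfile (G.replace β i b) := by
  intro p
  by_cases hp : p = i
  · subst hp
    simpa [replace] using hb
  · simpa [replace, hp] using hβ p

theorem isBehProfile_rho (i : Fin G.n) (j : ℕ) {β βt : G.Profile} (hβ : G.IsBehProfile β)
    (hβt : G.IsBehProfile βt) : G.IsBehProfile (G.rho i j β βt) := by
  intro p q hq
  by_cases hp : p = i ∧ ∃ h ∈ G.Info i q, ∃ b ∈ h, b ∈ G.infoA i j
  · obtain ⟨rfl, hfol⟩ := hp
    simpa [rho, hfol] using hβt p q hq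
  · simpa [rho, hp] using hβ p q hq

section

variable {β βt : G.Profile} {μ : G.Belief}

theorem isOptimalOn_uActFrom (hPR : G.PerfectRecall) (hj : j < G.m i) (hβ : G.IsBehProfile β)
    (hβt : G.IsBehProfile βt) (hμ : G.IsBelief μ) (hY : G.YConsistent β μ)
    (hopt : IsOptimalOn (G.infoA i j) (fun a ↦ G.uCond i j a (G.rho i j β βt) μ) (βt i j))
    {b : ℕ → ℕ → ℝ} (hb : G.IsBehStrategy i b) {r : List ℕ} (hr : G.IsSubgameRoot r) :
    IsOptimalOn (G.infoA i j)
      (fun a ↦ G.uActFrom i j a r (G.rho i j (G.replace β i b) βt)) (βt i j) := by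
  obtain ⟨κ, hκ, hdiamond⟩ := exists_uDiamondAct_eq_mul_uCond hPR hj hβ hμ hY hb βt
  obtain ⟨κ', hκ', hact⟩ := exists_uActFrom_eq_mul_uDiamondAct hj
    (isBehProfile_rho i j (isBehProfile_replace hβ hb) hβt) hr
  exact (hopt.congr_const_mul hκ hdiamond).congr_const_mul hκ' hact

theorem uExpFrom_replace_le (hPR : G.PerfectRecall) (hβ : G.IsBehProfile β)
    (hβt : G.IsBehProfile βt) (hμ : G.IsBelief μ) (hY : G.YConsistent β μ)
    (hopt : ∀ j < G.m i,
      IsOptimalOn (G.infoA i j) (fun a ↦ G.uCond i j a (G.rho i j β βt) μ) (βt i j))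
    {b : ℕ → ℕ → ℝ} (hb : G.IsBehStrategy i b) {r : List ℕ} (hr : G.IsSubgameRoot r) :
    G.uExpFrom i (G.replace β i b) r ≤ G.uExpFrom i (G.replace β i (βt i)) r := by
  rw [← sub_nonpos, ← replace_replace β i b (βt i), uExpFrom_sub_uExpFrom_replace hPR]
  refine Finset.sum_nonpos fun j hj ↦ ?_
  rw [Finset.mem_range] at hj
  simp only [sub_mul, Finset.sum_sub_distrib, sub_nonpos]
  exact (isOptimalOn_uActFrom hPR hj hβ hβt hμ hY (hopt j hj) hb hr).sum_mul_le
    (isBehProfile_replace hβ hb i j hj)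

theorem uExpFrom_eq_replace_iff (hPR : G.PerfectRecall) (hβ : G.IsBehProfile β)
    (hβt : G.IsBehProfile βt) (hμ : G.IsBelief μ) (hY : G.YConsistent β μ)
    (hopt : ∀ j < G.m i,
      IsOptimalOn (G.infoA i j) (fun a ↦ G.uCond i j a (G.rho i j β βt) μ) (βt i j))
    {r : List ℕ} (hr : G.IsSubgameRoot r) :
    G.uExpFrom i β r = G.uExpFrom i (G.replace β i (βt i)) r ↔ ∀ j < G.m i,
      IsOptimalOn (G.infoA i j) (fun a ↦ G.uActFrom i j a r (G.rho i j β βt)) (β i j) := by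
  have hβt_opt : ∀ j < G.m i,
      IsOptimalOn (G.infoA i j) (fun a ↦ G.uActFrom i j a r (G.rho i j β βt)) (βt i j) :=
    fun j hj ↦ by
      simpa only [replace_self] using
        isOptimalOn_uActFrom hPR hj hβ hβt hμ hY (hopt j hj) (hβ i) hr
  rw [← sub_eq_zero, uExpFrom_sub_uExpFrom_replace hPR]
  simp only [sub_mul, Finset.sum_sub_distrib (s := G.infoA i _)]
  rw [Finset.sum_eq_zero_iff_of_nonpos fun j hj ↦ sub_nonpos.2
    ((hβt_opt j (Finset.mem_range.1 hj)).sum_mul_le (hβ i j (Finset.mem_range.1 hj)))]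
  simp only [Finset.mem_range, sub_eq_zero]
  exact forall₂_congr fun j hj ↦
    ((hβt_opt j hj).isOptimalOn_iff_sum_eq (hβt i j hj) (hβ i j hj)).symm

theorem isSubgamePerfect_iff_isOptimalOn_uDiamondAct (hPR : G.PerfectRecall)
    (hβ : G.IsBehProfile β) (hβt : G.IsBehProfile βt) (hμ : G.IsBelief μ)
    (hY : G.YConsistent β μ) (hopt : ∀ i, ∀ j < G.m i,
      IsOptimalOn (G.infoA i j) (fun a ↦ G.uCond i j a (G.rho i j β βt) μ) (βt i j)) :
    G.IsSubgamePerfect β ↔ ∀ i, ∀ j < G.m i,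
      IsOptimalOn (G.infoA i j) (fun a ↦ G.uDiamondAct i j a (G.rho i j β βt)) (β i j) := by
  constructor
  · intro hSP i j hj
    obtain ⟨R, hR⟩ := exists_isSmallestSubgameRoot hj
    have hle : G.uExpFrom i β R ≤ G.uExpFrom i (G.replace β i (βt i)) R := by
      simpa only [replace_self] using
        uExpFrom_replace_le hPR hβ hβt hμ hY (hopt i) (hβ i) hR.isSubgameRoot
    have heq := hle.antisymm (hSP.2 R hR.isSubgameRoot i (βt i) (hβt i))
    have hact :=
      (uExpFrom_eq_replace_iff hPR hβ hβt hμ hY (hopt i) hR.isSubgameRoot).1 heq j hj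
    exact hact.congr_const_mul zero_le_one fun a ha ↦ by
      rw [hR.uDiamondAct_eq_uActFrom hj ha, one_mul]
  · refine fun hdiamond ↦ ⟨hβ, fun r hr i b hb ↦ ?_⟩
    rw [(uExpFrom_eq_replace_iff hPR hβ hβt hμ hY (hopt i) hr).2 fun j hj ↦ ?_]
    · exact uExpFrom_replace_le hPR hβ hβt hμ hY (hopt i) hb hr
    · obtain ⟨κ, hκ, hact⟩ :=
        exists_uActFrom_eq_mul_uDiamondAct hj (isBehProfile_rho i j hβ hβt) hr
      exact (hdiamond i j hj).congr_const_mul hκ hact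

end

theorem isSubgamePerfect_iff_exists_isOptimalOn (hPR : G.PerfectRecall) {β : G.Profile}
    (hβ : G.IsBehProfile β) :
    G.IsSubgamePerfect β ↔ ∃ (βt : G.Profile) (μ : G.Belief),
      G.IsBehProfile βt ∧ G.IsBelief μ ∧ G.YConsistent β μ ∧ ∀ i, ∀ j < G.m i,
        IsOptimalOn (G.infoA i j) (fun a ↦ G.uDiamondAct i j a (G.rho i j β βt)) (β i j) ∧
        IsOptimalOn (G.infoA i j) (fun a ↦ G.uCond i j a (G.rho i j β βt) μ) (βt i j) := by
  constructor
  · intro hSP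
    obtain ⟨μ, hμ, hY⟩ := exists_isBelief_yConsistent hβ
    obtain ⟨βt, hβt, hopt⟩ := exists_isBehProfile_isOptimalOn_uCond hPR β μ
    have hdiamond :=
      (isSubgamePerfect_iff_isOptimalOn_uDiamondAct hPR hβ hβt hμ hY hopt).1 hSP
    exact ⟨βt, μ, hβt, hμ, hY, fun i j hj ↦ ⟨hdiamond i j hj, hopt i j hj⟩⟩
  · rintro ⟨βt, μ, hβt, hμ, hY, hopt⟩
    exact (isSubgamePerfect_iff_isOptimalOn_uDiamondAct hPR hβ hβt hμ hY
      fun i j hj ↦ (hopt i j hj).2).2 fun i j hj ↦ (hopt i j hj).1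

end EFG

/-- Theorem 5: `β*` is a subgame perfect equilibrium in behavioral strategies iff the
polynomial system (18) is solvable. -/
theorem stmt10 (G : EFG) (hPR : G.PerfectRecall) (β : G.Profile) (hβ : G.IsBehProfile β) :
    G.IsSubgamePerfect β ↔
      ∃ (βt : G.Profile) (μ : G.Belief) (lam lamt : Fin G.n → ℕ → ℕ → ℝ)
        (ze zet : Fin G.n → ℕ → ℝ),
        (∀ (i : Fin G.n) (j : ℕ), j < G.m i → ∀ a ∈ G.infoA i j,
          G.uDiamondAct i j a (G.rho i j β βt) + lam i j a - ze i j = 0) ∧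
        (∀ (i : Fin G.n) (j : ℕ), j < G.m i → ∀ a ∈ G.infoA i j,
          G.uCond i j a (G.rho i j β βt) μ + lamt i j a - zet i j = 0) ∧
        (∀ (i : Fin G.n) (j : ℕ), j < G.m i → ∀ h ∈ G.Info i j,
          G.YInfo i j β * μ i j h = G.Yh i β h ∧ 0 ≤ μ i j h) ∧
        (∀ (i : Fin G.n) (j : ℕ), j < G.m i →
          (∑ h ∈ G.Info i j, μ i j h = 1) ∧ (∑ a ∈ G.infoA i j, β i j a = 1) ∧
          (∑ a ∈ G.infoA i j, βt i j a = 1)) ∧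
        (∀ (i : Fin G.n) (j : ℕ), j < G.m i → ∀ a ∈ G.infoA i j,
          β i j a * lam i j a = 0 ∧ βt i j a * lamt i j a = 0 ∧
          0 ≤ β i j a ∧ 0 ≤ lam i j a ∧ 0 ≤ βt i j a ∧ 0 ≤ lamt i j a) := by
  rw [EFG.isSubgamePerfect_iff_exists_isOptimalOn hPR hβ]
  constructor
  · rintro ⟨βt, μ, hβt, hμ, hY, hopt⟩
    let d i j a := G.uDiamondAct i j a (G.rho i j β βt)
    let c i j a := G.uCond i j a (G.rho i j β βt) μ
    let ze i j := ∑ a ∈ G.infoA i j, β i j a * d i j a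
    let zet i j := ∑ a ∈ G.infoA i j, βt i j a * c i j a
    refine ⟨βt, μ, fun i j a ↦ ze i j - d i j a, fun i j a ↦ zet i j - c i j a, ze, zet,
      fun i j _ a _ ↦ by simp [d], fun i j _ a _ ↦ by simp [c],
      fun i j hj h hI ↦ ⟨hY i j hj h hI, (hμ i j hj).1 h hI⟩,
      fun i j hj ↦ ⟨(hμ i j hj).2, (hβ i j hj).2, (hβt i j hj).2⟩, fun i j hj a ha ↦ ?_⟩
    obtain ⟨hd, hc⟩ := hopt i j hj
    exact ⟨hd.mul_sub_eq_zero (hβ i j hj) ha, hc.mul_sub_eq_zero (hβt i j hj) ha,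
      (hβ i j hj).1 a ha, sub_nonneg.2 (hd a ha), (hβt i j hj).1 a ha, sub_nonneg.2 (hc a ha)⟩
  · rintro ⟨βt, μ, lam, lamt, ze, zet, hd, hc, hY, hsum, hslack⟩
    have hβt : G.IsBehProfile βt := fun i j hj ↦
      ⟨fun a ha ↦ (hslack i j hj a ha).2.2.2.2.1, (hsum i j hj).2.2⟩
    refine ⟨βt, μ, hβt, fun i j hj ↦ ⟨fun h hI ↦ (hY i j hj h hI).2, (hsum i j hj).1⟩,
      fun i j hj h hI ↦ (hY i j hj h hI).1, fun i j hj ↦ ⟨?_, ?_⟩⟩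
    · exact IsDistribOn.isOptimalOn_of_multipliers (hβ i j hj) (hd i j hj)
        (fun a ha ↦ (hslack i j hj a ha).1) fun a ha ↦ (hslack i j hj a ha).2.2.2.1
    · exact IsDistribOn.isOptimalOn_of_multipliers (hβt i j hj) (hc i j hj)
        (fun a ha ↦ (hslack i j hj a ha).2.1) fun a ha ↦ (hslack i j hj a ha).2.2.2.2.2
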